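/- arXiv:math/0603035 — 2 statements merged into one kernel-verified Lean document; each statement's English description precedes it below -/
import Mathlib

section
/- Let m, n ≥ 1. (a) If (H_ε)_{ε∈(0,1]} belongs to N_τ(ℝ^{m+n}) and (f_ε)_{ε∈(0,1]} belongs to E_S(ℝ^n), then the net (x ↦ ∫_{ℝ^n} H_ε(x,y) f_ε(y) dy)_{ε∈(0,1]} belongs to N_τ(ℝ^m). (b) If (H_ε)_{ε∈(0,1]} belongs to E_τ(ℝ^{m+n}) and (f_ε)_{ε∈(0,1]} belongs to N_S(ℝ^n), then the net (x ↦ ∫_{ℝ^n} H_ε(x,y) f_ε(y) dy)_{ε∈(0,1]} belongs to N_τ(ℝ^m). Consequently the class of this net in the quotient E_τ(ℝ^m)/N_τ(ℝ^m) depends only on the classes of (H_ε) and (f_ε) and not on the chosen representatives. -/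
open MeasureTheory Filter

noncomputable def mu {E : Type*} [NormedAddCommGroup E] [NormedSpace ℝ E]
    (r : ℤ) (l : ℕ) (f : E → ℂ) : ENNReal :=
  ⨆ (x : E) (i : ℕ) (_ : i ≤ l),
    ENNReal.ofReal ((1 + ‖x‖) ^ r * ‖iteratedFDeriv ℝ i f x‖)

def IsOEps (g : ℝ → ENNReal) (h : ℝ → ℝ) : Prop :=
  ∃ C > (0:ℝ), ∃ η > (0:ℝ), ∀ ε : ℝ, 0 < ε → ε ≤ η → g ε ≤ ENNReal.ofReal (C * h ε)

def SchwartzLike {E : Type*} [NormedAddCommGroup E] [NormedSpace ℝ E] (f : E → ℂ) : Prop :=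
  ContDiff ℝ (⊤ : ℕ∞) f ∧ ∀ q l : ℕ, mu (q : ℤ) l f < ⊤

def TemperateGrowth' {E : Type*} [NormedAddCommGroup E] [NormedSpace ℝ E] (f : E → ℂ) : Prop :=
  ContDiff ℝ (⊤ : ℕ∞) f ∧ ∀ l : ℕ, ∃ q : ℕ, mu (-(q:ℤ)) l f < ⊤

def IsESNet {E : Type*} [NormedAddCommGroup E] [NormedSpace ℝ E] (f : ℝ → E → ℂ) : Prop :=
  (∀ ε ∈ Set.Ioc (0:ℝ) 1, SchwartzLike (f ε)) ∧
  ∀ q l : ℕ, ∃ N : ℕ, IsOEps (fun ε => mu (q:ℤ) l (f ε)) (fun ε => ε ^ (-(N:ℤ)))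

def IsNSNet {E : Type*} [NormedAddCommGroup E] [NormedSpace ℝ E] (f : ℝ → E → ℂ) : Prop :=
  (∀ ε ∈ Set.Ioc (0:ℝ) 1, SchwartzLike (f ε)) ∧
  ∀ q l p : ℕ, IsOEps (fun ε => mu (q:ℤ) l (f ε)) (fun ε => ε ^ p)

def IsEtauNet {E : Type*} [NormedAddCommGroup E] [NormedSpace ℝ E] (f : ℝ → E → ℂ) : Prop :=
  (∀ ε ∈ Set.Ioc (0:ℝ) 1, TemperateGrowth' (f ε)) ∧
  ∀ l : ℕ, ∃ q N : ℕ, IsOEps (fun ε => mu (-(q:ℤ)) l (f ε)) (fun ε => ε ^ (-(N:ℤ)))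

def IsNtauNet {E : Type*} [NormedAddCommGroup E] [NormedSpace ℝ E] (f : ℝ → E → ℂ) : Prop :=
  (∀ ε ∈ Set.Ioc (0:ℝ) 1, TemperateGrowth' (f ε)) ∧
  ∀ l : ℕ, ∃ q : ℕ, ∀ p : ℕ, IsOEps (fun ε => mu (-(q:ℤ)) l (f ε)) (fun ε => ε ^ p)

noncomputable def scaled {d : ℕ} (ρ : (Fin d → ℝ) → ℂ) (t : ℝ) (x : Fin d → ℝ) : ℂ :=
  ((t ^ (-(d:ℤ)) : ℝ) : ℂ) * ρ (t⁻¹ • x)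

def IsMollifier {d : ℕ} (ρ : SchwartzMap (Fin d → ℝ) ℂ) : Prop :=
  (∫ x : Fin d → ℝ, ρ x) = 1 ∧
  ∀ α : Fin d → ℕ, α ≠ 0 → (∫ x : Fin d → ℝ, (∏ j, (x j : ℂ) ^ (α j)) * ρ x) = 0

def MemLa (a : ℝ) (N : ℕ → ℝ) : Prop :=
  (∀ l, 0 ≤ N l) ∧
  ((a = 0 ∧ Filter.Tendsto (fun l : ℕ => N l / (l:ℝ)) Filter.atTop (nhds 0)) ∨
   (0 < a ∧ Filter.limsup (fun l : ℕ => N l / (l:ℝ)) Filter.atTop < a))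

def IsESLNet {E : Type*} [NormedAddCommGroup E] [NormedSpace ℝ E]
    (a : ℝ) (f : ℝ → E → ℂ) : Prop :=
  (∀ ε ∈ Set.Ioc (0:ℝ) 1, SchwartzLike (f ε)) ∧
  ∃ N : ℕ → ℝ, MemLa a N ∧
    ∀ q l : ℕ, IsOEps (fun ε => mu (q:ℤ) l (f ε)) (fun ε => ε ^ (-(N l)))

def IsEtauLNet {E : Type*} [NormedAddCommGroup E] [NormedSpace ℝ E]
    (c : ℝ) (f : ℝ → E → ℂ) : Prop :=
  (∀ ε ∈ Set.Ioc (0:ℝ) 1, TemperateGrowth' (f ε)) ∧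
  ∃ N : ℕ → ℝ, MemLa c N ∧ ∃ q : ℕ, ∀ l : ℕ,
    IsOEps (fun ε => mu (-(q:ℤ)) l (f ε)) (fun ε => ε ^ (-(N l)))

def IsESinfNet {E : Type*} [NormedAddCommGroup E] [NormedSpace ℝ E] (f : ℝ → E → ℂ) : Prop :=
  (∀ ε ∈ Set.Ioc (0:ℝ) 1, SchwartzLike (f ε)) ∧
  ∃ N : ℕ, ∀ q l : ℕ, IsOEps (fun ε => mu (q:ℤ) l (f ε)) (fun ε => ε ^ (-(N:ℤ)))

def ModerateNetMaps (m n : ℕ)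
    (L : ℝ → SchwartzMap (Fin n → ℝ) ℂ → ((Fin m → ℝ) → ℂ)) : Prop :=
  (∀ ε ∈ Set.Ioc (0:ℝ) 1, ∀ f, TemperateGrowth' (L ε f)) ∧
  ∀ l : ℕ, ∃ C : ℝ → ℝ, (∀ ε, 0 ≤ C ε) ∧
    (∃ N : ℕ, ∃ C₀ > (0:ℝ), ∃ η > (0:ℝ), ∀ ε : ℝ, 0 < ε → ε ≤ η → C ε ≤ C₀ * ε ^ (-(N:ℤ))) ∧
    ∃ p q l' : ℕ, ∃ η > (0:ℝ), ∀ ε : ℝ, 0 < ε → ε ≤ η →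
      ∀ f : SchwartzMap (Fin n → ℝ) ℂ,
        mu (-(p:ℤ)) l (L ε f) ≤ ENNReal.ofReal (C ε) * mu (q:ℤ) l' ⇑f

def NegligibleNetMaps (m n : ℕ)
    (L : ℝ → SchwartzMap (Fin n → ℝ) ℂ → ((Fin m → ℝ) → ℂ)) : Prop :=
  (∀ ε ∈ Set.Ioc (0:ℝ) 1, ∀ f, TemperateGrowth' (L ε f)) ∧
  ∀ l : ℕ, ∃ C : ℝ → ℝ, (∀ ε, 0 ≤ C ε) ∧
    (∀ p' : ℕ, ∃ C₀ > (0:ℝ), ∃ η > (0:ℝ), ∀ ε : ℝ, 0 < ε → ε ≤ η → C ε ≤ C₀ * ε ^ p') ∧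
    ∃ p q l' : ℕ, ∃ η > (0:ℝ), ∀ ε : ℝ, 0 < ε → ε ≤ η →
      ∀ f : SchwartzMap (Fin n → ℝ) ℂ,
        mu (-(p:ℤ)) l (L ε f) ≤ ENNReal.ofReal (C ε) * mu (q:ℤ) l' ⇑f

def StronglyModerateWith (m n : ℕ)
    (L : ℝ → SchwartzMap (Fin n → ℝ) ℂ → ((Fin m → ℝ) → ℂ))
    (lam : ℕ → ℕ) (r : ℕ → ℝ) : Prop :=
  (∀ ε ∈ Set.Ioc (0:ℝ) 1, ∀ f, TemperateGrowth' (L ε f)) ∧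
  (∀ l, 0 ≤ r l) ∧
  ∀ l : ℕ, ∃ C ≥ (0:ℝ), ∃ p q : ℕ, ∃ η > (0:ℝ), ∀ ε : ℝ, 0 < ε → ε ≤ η →
    ∀ f : SchwartzMap (Fin n → ℝ) ℂ,
      mu (-(p:ℤ)) l (L ε f) ≤ ENNReal.ofReal (C * ε ^ (-(r l))) * mu (q:ℤ) (lam l) ⇑f

def ContinuousIntoOM (m n : ℕ) (L : SchwartzMap (Fin n → ℝ) ℂ → ((Fin m → ℝ) → ℂ)) : Prop :=
  ∀ l : ℕ, ∃ C ≥ (0:ℝ), ∃ p q l' : ℕ, ∀ f,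
    mu (-(p:ℤ)) l (L f) ≤ ENNReal.ofReal C * mu (q:ℤ) l' ⇑f

noncomputable def muOn {d : ℕ} (Ω : Set (Fin d → ℝ)) (r : ℤ) (l : ℕ)
    (f : (Fin d → ℝ) → ℂ) : ENNReal :=
  ⨆ (x : Ω) (i : ℕ) (_ : i ≤ l),
    ENNReal.ofReal ((1 + ‖(x : Fin d → ℝ)‖) ^ r * ‖iteratedFDerivWithin ℝ i f Ω (x : Fin d → ℝ)‖)

def IsBox {d : ℕ} (Ω : Set (Fin d → ℝ)) : Prop :=
  ∃ I : Fin d → Set ℝ, (∀ j, IsOpen (I j) ∧ Convex ℝ (I j)) ∧ Ω = Set.univ.pi I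

def IsRegularSet (R : Set (ℕ → ℝ)) : Prop :=
  R.Nonempty ∧ (∀ N ∈ R, ∀ n, 0 ≤ N n) ∧
  (∀ N ∈ R, ∀ k : ℕ, ∃ N' ∈ R, ∀ n, N n + k ≤ N' n) ∧
  (∀ N₁ ∈ R, ∀ N₂ ∈ R, ∃ N ∈ R, ∀ n, max (N₁ n) (N₂ n) ≤ N n) ∧
  (∀ N₁ ∈ R, ∀ N₂ ∈ R, ∃ N ∈ R, ∀ l₁ l₂ : ℕ, N₁ l₁ + N₂ l₂ ≤ N (l₁ + l₂))

def IsESRNet {E : Type*} [NormedAddCommGroup E] [NormedSpace ℝ E]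
    (R : Set (ℕ → ℝ)) (f : ℝ → E → ℂ) : Prop :=
  (∀ ε ∈ Set.Ioc (0:ℝ) 1, SchwartzLike (f ε)) ∧
  ∃ N ∈ R, ∀ q l : ℕ, IsOEps (fun ε => mu (q:ℤ) l (f ε)) (fun ε => ε ^ (-(N l)))

def IsEtauRNet {E : Type*} [NormedAddCommGroup E] [NormedSpace ℝ E]
    (R : Set (ℕ → ℝ)) (f : ℝ → E → ℂ) : Prop :=
  (∀ ε ∈ Set.Ioc (0:ℝ) 1, TemperateGrowth' (f ε)) ∧
  ∃ N ∈ R, ∃ q : ℕ, ∀ l : ℕ,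
    IsOEps (fun ε => mu (-(q:ℤ)) l (f ε)) (fun ε => ε ^ (-(N l)))

noncomputable def pderiv' {d : ℕ} (j : Fin d) (f : (Fin d → ℝ) → ℂ) : (Fin d → ℝ) → ℂ :=
  fun x => fderiv ℝ f x (Pi.single j 1)

noncomputable def multiDeriv {d : ℕ} : List (Fin d) → ((Fin d → ℝ) → ℂ) → ((Fin d → ℝ) → ℂ)
  | [], f => f
  | j :: js, f => pderiv' j (multiDeriv js f)

/-- A function decays rapidly if it is bounded against every power of `1 + ‖y‖`. -/
def RapidDecay {G : Type*} [NormedAddCommGroup G] (f : G → ℂ) : Prop :=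
  ∀ k : ℕ, ∃ B : ℝ, ∀ y, (1 + ‖y‖) ^ k * ‖f y‖ ≤ B

lemma norm_smul_le_of_polynomial_bound {E G V : Type*} [NormedAddCommGroup E]
    [NormedAddCommGroup G] [NormedAddCommGroup V] [NormedSpace ℂ V]
    {H : E × G → V} {f : G → ℂ} {q P : ℕ} {A B : ℝ}
    (hA : 0 ≤ A) (hH : ∀ z, ‖H z‖ ≤ A * (1 + ‖z‖) ^ q)
    (hf : ∀ y, (1 + ‖y‖) ^ (q + P) * ‖f y‖ ≤ B) (x : E) (y : G) :
    ‖f y • H (x, y)‖ ≤ A * B * (1 + ‖x‖) ^ q * (1 + ‖y‖) ^ (-(P : ℝ)) := by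
  have hy : 0 < 1 + ‖y‖ := by positivity
  have hz : 1 + ‖(x, y)‖ ≤ (1 + ‖x‖) * (1 + ‖y‖) := by
    have h1 : ‖(x, y)‖ ≤ ‖x‖ + ‖y‖ := by
      rw [Prod.norm_def]
      exact max_le_add_of_nonneg (norm_nonneg _) (norm_nonneg _)
    nlinarith [mul_nonneg (norm_nonneg x) (norm_nonneg y)]
  have hfy : (1 + ‖y‖) ^ q * ‖f y‖ ≤ B * (1 + ‖y‖) ^ (-(P : ℝ)) := by
    rw [Real.rpow_neg hy.le, Real.rpow_natCast, ← div_eq_mul_inv, le_div_iff₀ (by positivity)]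
    calc _ = (1 + ‖y‖) ^ (q + P) * ‖f y‖ := by ring
      _ ≤ B := hf y
  calc ‖f y • H (x, y)‖ = ‖f y‖ * ‖H (x, y)‖ := norm_smul _ _
    _ ≤ ‖f y‖ * (A * ((1 + ‖x‖) * (1 + ‖y‖)) ^ q) := by
        gcongr
        exact (hH _).trans (by gcongr)
    _ = A * (1 + ‖x‖) ^ q * ((1 + ‖y‖) ^ q * ‖f y‖) := by rw [mul_pow]; ring
    _ ≤ A * (1 + ‖x‖) ^ q * (B * (1 + ‖y‖) ^ (-(P : ℝ))) := by gcongr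
    _ = _ := by ring

section ParametricIntegral

variable {E G V : Type} [NormedAddCommGroup E] [NormedSpace ℝ E]
  [NormedAddCommGroup G] [NormedSpace ℝ G] [NormedAddCommGroup V] [NormedSpace ℝ V]

/-- The partial derivative of a function on a product in the first variable. -/
noncomputable def fderivLeft (H : E × G → V) (z : E × G) : E →L[ℝ] V :=
  (fderiv ℝ H z).comp (ContinuousLinearMap.inl ℝ E G)

lemma fderivLeft_eq_comp (H : E × G → V) :
    fderivLeft H =
      (ContinuousLinearMap.precomp V (ContinuousLinearMap.inl ℝ E G)) ∘ fderiv ℝ H :=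
  rfl

lemma contDiff_fderivLeft {H : E × G → V} (hH : ContDiff ℝ (⊤ : ℕ∞) H) :
    ContDiff ℝ (⊤ : ℕ∞) (fderivLeft H) := by
  rw [fderivLeft_eq_comp]
  exact (ContinuousLinearMap.contDiff _).comp (contDiff_infty_iff_fderiv.1 hH).2

lemma norm_iteratedFDeriv_fderivLeft_le {H : E × G → V} (hH : ContDiff ℝ (⊤ : ℕ∞) H)
    (i : ℕ) (z : E × G) :
    ‖iteratedFDeriv ℝ i (fderivLeft H) z‖ ≤ ‖iteratedFDeriv ℝ (i + 1) H z‖ := by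
  rw [fderivLeft_eq_comp, ← norm_iteratedFDeriv_fderiv]
  refine (ContinuousLinearMap.norm_iteratedFDeriv_comp_left _
    (contDiff_infty_iff_fderiv.1 hH).2.contDiffAt (by exact_mod_cast le_top)).trans ?_
  refine mul_le_of_le_one_left (norm_nonneg _) ?_
  refine ContinuousLinearMap.opNorm_le_bound _ zero_le_one fun T => ?_
  refine (ContinuousLinearMap.opNorm_comp_le _ _).trans ?_
  rw [one_mul]
  exact mul_le_of_le_one_right (norm_nonneg _) (ContinuousLinearMap.norm_inl_le_one ℝ E G)

lemma hasTemperateGrowth_fderivLeft {H : E × G → V} (hH : H.HasTemperateGrowth) :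
    (fderivLeft H).HasTemperateGrowth := by
  refine ⟨contDiff_fderivLeft hH.1, fun i => ?_⟩
  obtain ⟨k, C, hC⟩ := hH.2 (i + 1)
  exact ⟨k, C, fun z => (norm_iteratedFDeriv_fderivLeft_le hH.1 i z).trans (hC z)⟩

variable [NormedSpace ℂ V] [SMulCommClass ℝ ℂ V] [MeasurableSpace G] [BorelSpace G]
  [SecondCountableTopology G] (μ : Measure G) [μ.HasTemperateGrowth]

lemma hasFDerivAt_integral_smul {H : E × G → V} (hH : H.HasTemperateGrowth)
    {f : G → ℂ} (hfc : Continuous f) (hf : RapidDecay f) (x₀ : E) :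
    HasFDerivAt (fun x => ∫ y, f y • H (x, y) ∂μ) (∫ y, f y • fderivLeft H (x₀, y) ∂μ) x₀ := by
  obtain ⟨q, A, hA, hHA⟩ := hH.norm_iteratedFDeriv_le_uniform 1
  obtain ⟨B, hB⟩ := hf (q + μ.integrablePower)
  have hB0 : 0 ≤ B := le_trans (by positivity) (hB 0)
  have hH0 : ∀ z, ‖H z‖ ≤ A * (1 + ‖z‖) ^ q := fun z => by simpa using hHA 0 (by simp) z
  have hH1 : ∀ z, ‖fderivLeft H z‖ ≤ A * (1 + ‖z‖) ^ q := fun z => by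
    have := (norm_iteratedFDeriv_fderivLeft_le hH.1 0 z).trans (hHA 1 le_rfl z)
    rwa [norm_iteratedFDeriv_zero] at this
  have hint := Measure.integrable_pow_neg_integrablePower μ
  have hHc : Continuous H := hH.1.continuous
  have hKc : Continuous (fderivLeft H) := (contDiff_fderivLeft hH.1).continuous
  refine hasFDerivAt_integral_of_dominated_of_fderiv_le
    (F := fun x y => f y • H (x, y)) (F' := fun x y => f y • fderivLeft H (x, y))
    (bound := fun y => A * B * (2 + ‖x₀‖) ^ q * (1 + ‖y‖) ^ (-(μ.integrablePower : ℝ)))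
    (Metric.ball_mem_nhds x₀ one_pos) (.of_forall fun x => ?_) ?_ ?_
    (.of_forall fun y x hx => ?_) (hint.const_mul _) (.of_forall fun y x _ => ?_)
  · exact Continuous.aestronglyMeasurable (by fun_prop)
  · refine (hint.const_mul (A * B * (1 + ‖x₀‖) ^ q)).mono'
      (Continuous.aestronglyMeasurable (by fun_prop)) (.of_forall fun y => ?_)
    exact norm_smul_le_of_polynomial_bound hA hH0 hB x₀ y
  · exact Continuous.aestronglyMeasurable (by fun_prop)
  · refine (norm_smul_le_of_polynomial_bound hA hH1 hB x y).trans ?_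
    have hx' : ‖x‖ ≤ ‖x₀‖ + 1 := by
      have := norm_sub_norm_le x x₀
      rw [mem_ball_iff_norm] at hx
      linarith
    have : 1 + ‖x‖ ≤ 2 + ‖x₀‖ := by linarith
    gcongr
  · have hd : HasFDerivAt H (fderiv ℝ H (x, y)) (x, y) :=
      (hH.1.differentiable (by simp)).differentiableAt.hasFDerivAt
    exact (hd.comp x (hasFDerivAt_prodMk_left x y)).const_smul (f y)

lemma contDiff_integral_smul {f : G → ℂ} (hfc : Continuous f) (hf : RapidDecay f)
    {H : E × G → V} (hH : H.HasTemperateGrowth) :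
    ContDiff ℝ (⊤ : ℕ∞) (fun x => ∫ y, f y • H (x, y) ∂μ) := by
  refine contDiff_infty.2 fun k => ?_
  induction k generalizing V with
  | zero =>
    exact contDiff_zero.2 <| continuous_iff_continuousAt.2 fun x =>
      (hasFDerivAt_integral_smul μ hH hfc hf x).continuousAt
  | succ k ih =>
    exact contDiff_succ_iff_hasFDerivAt.2 ⟨_, ih (hasTemperateGrowth_fderivLeft hH),
      hasFDerivAt_integral_smul μ hH hfc hf⟩

lemma norm_iteratedFDeriv_integral_smul_le {f : G → ℂ} (hfc : Continuous f)
    (hf : RapidDecay f) {H : E × G → V} (hH : H.HasTemperateGrowth) {i q : ℕ} {A B : ℝ}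
    (hA : 0 ≤ A) (hHA : ∀ z, ‖iteratedFDeriv ℝ i H z‖ ≤ A * (1 + ‖z‖) ^ q)
    (hB : ∀ y, (1 + ‖y‖) ^ (q + μ.integrablePower) * ‖f y‖ ≤ B) (x : E) :
    ‖iteratedFDeriv ℝ i (fun x => ∫ y, f y • H (x, y) ∂μ) x‖ ≤
      A * B * (1 + ‖x‖) ^ q * ∫ y, (1 + ‖y‖) ^ (-(μ.integrablePower : ℝ)) ∂μ := by
  induction i generalizing V with
  | zero =>
    simp only [norm_iteratedFDeriv_zero] at hHA ⊢
    rw [← integral_const_mul]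
    exact norm_integral_le_of_norm_le
      ((Measure.integrable_pow_neg_integrablePower μ).const_mul _)
      (.of_forall fun y => norm_smul_le_of_polynomial_bound hA hHA hB x y)
  | succ i ih =>
    rw [← norm_iteratedFDeriv_fderiv,
      funext fun x => (hasFDerivAt_integral_smul μ hH hfc hf x).fderiv]
    exact ih (hasTemperateGrowth_fderivLeft hH) fun z =>
      (norm_iteratedFDeriv_fderivLeft_le hH.1 i z).trans (hHA z)

end ParametricIntegral

section Seminorms

variable {E : Type*} [NormedAddCommGroup E] [NormedSpace ℝ E]

lemma mu_le_ofReal_iff {r : ℤ} {l : ℕ} {f : E → ℂ} {A : ℝ} (hA : 0 ≤ A) :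
    mu r l f ≤ ENNReal.ofReal A ↔
      ∀ x, ∀ i ≤ l, (1 + ‖x‖) ^ r * ‖iteratedFDeriv ℝ i f x‖ ≤ A := by
  simp only [mu, iSup_le_iff, ENNReal.ofReal_le_ofReal_iff hA]

lemma mu_neg_le_ofReal_iff {q l : ℕ} {f : E → ℂ} {A : ℝ} (hA : 0 ≤ A) :
    mu (-(q : ℤ)) l f ≤ ENNReal.ofReal A ↔
      ∀ x, ∀ i ≤ l, ‖iteratedFDeriv ℝ i f x‖ ≤ A * (1 + ‖x‖) ^ q := by
  rw [mu_le_ofReal_iff hA]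
  refine forall₃_congr fun x i _ => ?_
  have : 0 < (1 + ‖x‖) ^ q := by positivity
  rw [zpow_neg, zpow_natCast, inv_mul_le_iff₀ this, mul_comm A]

lemma TemperateGrowth'.hasTemperateGrowth {f : E → ℂ} (hf : TemperateGrowth' f) :
    f.HasTemperateGrowth := by
  refine ⟨hf.1, fun l => ?_⟩
  obtain ⟨q, hq⟩ := hf.2 l
  exact ⟨q, _, fun x => (mu_neg_le_ofReal_iff ENNReal.toReal_nonneg).1
    (ENNReal.ofReal_toReal hq.ne).ge x l le_rfl⟩

lemma pow_mul_norm_le_of_mu_le {f : E → ℂ} {k : ℕ} {B : ℝ} (hB : 0 ≤ B)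
    (h : mu (k : ℤ) 0 f ≤ ENNReal.ofReal B) (y : E) : (1 + ‖y‖) ^ k * ‖f y‖ ≤ B := by
  simpa using (mu_le_ofReal_iff hB).1 h y 0 le_rfl

lemma SchwartzLike.rapidDecay {f : E → ℂ} (hf : SchwartzLike f) : RapidDecay f := fun k =>
  ⟨_, pow_mul_norm_le_of_mu_le ENNReal.toReal_nonneg
    (ENNReal.ofReal_toReal (hf.2 k 0).ne).ge⟩

lemma IsOEps.exists_real_bounds {g₁ g₂ : ℝ → ENNReal} {h₁ h₂ : ℝ → ℝ}
    (hg₁ : IsOEps g₁ h₁) (hg₂ : IsOEps g₂ h₂) :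
    ∃ C₁ > (0 : ℝ), ∃ C₂ > (0 : ℝ), ∃ η > (0 : ℝ), η ≤ 1 ∧ ∀ ε, 0 < ε → ε ≤ η →
      g₁ ε ≤ ENNReal.ofReal (C₁ * h₁ ε) ∧ g₂ ε ≤ ENNReal.ofReal (C₂ * h₂ ε) := by
  obtain ⟨C₁, hC₁, η₁, hη₁, H₁⟩ := hg₁
  obtain ⟨C₂, hC₂, η₂, hη₂, H₂⟩ := hg₂
  refine ⟨C₁, hC₁, C₂, hC₂, min (min η₁ η₂) 1, by positivity, min_le_right _ _, fun ε h0 h => ?_⟩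
  simp only [le_min_iff] at h
  exact ⟨H₁ ε h0 h.1.1, H₂ ε h0 h.1.2⟩

end Seminorms

section Kernel

variable {E G : Type} [NormedAddCommGroup E] [NormedSpace ℝ E]
  [NormedAddCommGroup G] [NormedSpace ℝ G] [MeasurableSpace G] [BorelSpace G]
  [SecondCountableTopology G] (μ : Measure G) [μ.HasTemperateGrowth]

lemma mu_integral_kernel_le {H : E × G → ℂ} {f : G → ℂ} (hH : TemperateGrowth' H)
    (hf : SchwartzLike f) {q l : ℕ} {A B : ℝ} (hA : 0 ≤ A) (hB : 0 ≤ B)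
    (hHA : mu (-(q : ℤ)) l H ≤ ENNReal.ofReal A)
    (hfB : mu ((q + μ.integrablePower : ℕ) : ℤ) 0 f ≤ ENNReal.ofReal B) :
    mu (-(q : ℤ)) l (fun x => ∫ y, H (x, y) * f y ∂μ) ≤
      ENNReal.ofReal (A * B * ∫ y, (1 + ‖y‖) ^ (-(μ.integrablePower : ℝ)) ∂μ) := by
  have hI : 0 ≤ ∫ y, (1 + ‖y‖) ^ (-(μ.integrablePower : ℝ)) ∂μ :=
    integral_nonneg fun y => by positivity
  rw [mu_neg_le_ofReal_iff (by positivity)]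
  intro x i hi
  have := norm_iteratedFDeriv_integral_smul_le μ hf.1.continuous hf.rapidDecay
    hH.hasTemperateGrowth hA (fun z => (mu_neg_le_ofReal_iff hA).1 hHA z i hi)
    (pow_mul_norm_le_of_mu_le hB hfB) x
  simp only [smul_eq_mul, mul_comm (f _)] at this
  exact this.trans (le_of_eq (by ring))

lemma temperateGrowth_integral_kernel {H : E × G → ℂ} {f : G → ℂ} (hH : TemperateGrowth' H)
    (hf : SchwartzLike f) : TemperateGrowth' (fun x => ∫ y, H (x, y) * f y ∂μ) := by
  constructor
  · simpa only [smul_eq_mul, mul_comm (f _)] using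
      contDiff_integral_smul μ hf.1.continuous hf.rapidDecay hH.hasTemperateGrowth
  · intro l
    obtain ⟨q, hq⟩ := hH.2 l
    exact ⟨q, (mu_integral_kernel_le μ hH hf ENNReal.toReal_nonneg ENNReal.toReal_nonneg
      (ENNReal.ofReal_toReal hq.ne).ge
      (ENNReal.ofReal_toReal (hf.2 (q + μ.integrablePower) 0).ne).ge).trans_lt
        ENNReal.ofReal_lt_top⟩

lemma isOEps_mu_integral_kernel {H : ℝ → E × G → ℂ} {f : ℝ → G → ℂ}
    (hH : ∀ ε ∈ Set.Ioc (0 : ℝ) 1, TemperateGrowth' (H ε))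
    (hf : ∀ ε ∈ Set.Ioc (0 : ℝ) 1, SchwartzLike (f ε)) {q l : ℕ} {h₁ h₂ h : ℝ → ℝ}
    (hHO : IsOEps (fun ε => mu (-(q : ℤ)) l (H ε)) h₁)
    (hfO : IsOEps (fun ε => mu ((q + μ.integrablePower : ℕ) : ℤ) 0 (f ε)) h₂)
    (h₁_nonneg : ∀ ε, 0 < ε → 0 ≤ h₁ ε) (h₂_nonneg : ∀ ε, 0 < ε → 0 ≤ h₂ ε)
    (h_eq : ∀ ε, 0 < ε → h₁ ε * h₂ ε = h ε) :
    IsOEps (fun ε => mu (-(q : ℤ)) l (fun x => ∫ y, H ε (x, y) * f ε y ∂μ)) h := by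
  obtain ⟨C₁, hC₁, C₂, hC₂, η, hη, hη1, hb⟩ := hHO.exists_real_bounds hfO
  have hI : 0 ≤ ∫ y, (1 + ‖y‖) ^ (-(μ.integrablePower : ℝ)) ∂μ :=
    integral_nonneg fun y => by positivity
  set I := ∫ y, (1 + ‖y‖) ^ (-(μ.integrablePower : ℝ)) ∂μ with hIdef
  refine ⟨C₁ * C₂ * (I + 1), by positivity, η, hη, fun ε h0 hε => ?_⟩
  have hmem : ε ∈ Set.Ioc (0 : ℝ) 1 := ⟨h0, hε.trans hη1⟩
  have hn₁ := h₁_nonneg ε h0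
  have hn₂ := h₂_nonneg ε h0
  refine (mu_integral_kernel_le μ (hH ε hmem) (hf ε hmem) (mul_nonneg hC₁.le hn₁)
    (mul_nonneg hC₂.le hn₂) (hb ε h0 hε).1 (hb ε h0 hε).2).trans
    (ENNReal.ofReal_le_ofReal ?_)
  rw [← hIdef, ← h_eq ε h0]
  calc C₁ * h₁ ε * (C₂ * h₂ ε) * I = C₁ * C₂ * I * (h₁ ε * h₂ ε) := by ring
    _ ≤ C₁ * C₂ * (I + 1) * (h₁ ε * h₂ ε) := by gcongr; linarith

lemma isNtauNet_integral_kernel_of_negligible_kernel {H : ℝ → E × G → ℂ} {f : ℝ → G → ℂ}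
    (hH : IsNtauNet H) (hf : IsESNet f) :
    IsNtauNet (fun ε x => ∫ y, H ε (x, y) * f ε y ∂μ) := by
  refine ⟨fun ε hε => temperateGrowth_integral_kernel μ (hH.1 ε hε) (hf.1 ε hε), fun l => ?_⟩
  obtain ⟨q, hq⟩ := hH.2 l
  obtain ⟨N, hN⟩ := hf.2 (q + μ.integrablePower) 0
  refine ⟨q, fun p => isOEps_mu_integral_kernel μ hH.1 hf.1 (hq (p + N)) hN
    (fun ε h => by positivity) (fun ε h => by positivity) fun ε h => ?_⟩
  rw [zpow_neg, zpow_natCast, pow_add, mul_inv_cancel_right₀ (by positivity)]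

lemma isNtauNet_integral_kernel_of_negligible_net {H : ℝ → E × G → ℂ} {f : ℝ → G → ℂ}
    (hH : IsEtauNet H) (hf : IsNSNet f) :
    IsNtauNet (fun ε x => ∫ y, H ε (x, y) * f ε y ∂μ) := by
  refine ⟨fun ε hε => temperateGrowth_integral_kernel μ (hH.1 ε hε) (hf.1 ε hε), fun l => ?_⟩
  obtain ⟨q, N, hN⟩ := hH.2 l
  refine ⟨q, fun p => isOEps_mu_integral_kernel μ hH.1 hf.1 hN
    (hf.2 (q + μ.integrablePower) 0 (N + p))
    (fun ε h => by positivity) (fun ε h => by positivity) fun ε h => ?_⟩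
  rw [zpow_neg, zpow_natCast, pow_add, inv_mul_cancel_left₀ (by positivity)]

end Kernel

/-- the generalized integral operator is independent of representatives:
a negligible kernel against a moderate net, or a moderate kernel against a negligible
net, yields a net in `N_τ(ℝ^m)`. -/
theorem stmt8 (m n : ℕ) (hm : 1 ≤ m) (hn : 1 ≤ n) :
    (∀ (H : ℝ → ((Fin m → ℝ) × (Fin n → ℝ)) → ℂ) (f : ℝ → (Fin n → ℝ) → ℂ),
      IsNtauNet H → IsESNet f →
      IsNtauNet (fun ε (x : Fin m → ℝ) => ∫ y : Fin n → ℝ, H ε (x, y) * f ε y)) ∧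
    (∀ (H : ℝ → ((Fin m → ℝ) × (Fin n → ℝ)) → ℂ) (f : ℝ → (Fin n → ℝ) → ℂ),
      IsEtauNet H → IsNSNet f →
      IsNtauNet (fun ε (x : Fin m → ℝ) => ∫ y : Fin n → ℝ, H ε (x, y) * f ε y)) := by
  exact ⟨fun _ _ hH hf => isNtauNet_integral_kernel_of_negligible_kernel volume hH hf,
    fun _ _ hH hf => isNtauNet_integral_kernel_of_negligible_net volume hH hf⟩
end

section
/- Let m, n ≥ 1 and let L : 𝓢(ℝ^n) → C^∞(ℝ^m) be a linear map, each value L(g) having temperate growth, which is continuous into O_M(ℝ^m). Let ψ ∈ 𝓢(ℝ^n), φ ∈ 𝓢(ℝ^m), and ε ∈ (0,1]; set ψ_ε(v) = ε^{-n} ψ(v/ε), φ_ε(u) = ε^{-m} φ(u/ε), and ψ_{ε,y}(v) = ψ_ε(y−v) for y ∈ ℝ^n. Then for every f ∈ 𝓢(ℝ^n) and every x ∈ ℝ^m: ∫_{ℝ^n} ( ∫_{ℝ^m} L(ψ_{ε,y})(x−u) φ_ε(u) du ) f(y) dy = ∫_{ℝ^m} L(h)(x−u) φ_ε(u) du, where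 h ∈ 𝓢(ℝ^n) is the function h(v) = ∫_{ℝ^n} ψ_ε(y−v) f(y) dy. -/
open MeasureTheory Filter

namespace SchwartzMap

open scoped BoundedContinuousFunction

/-- Peetre's inequality for the weight `(1 + ‖v‖) ^ q`. -/
lemma one_add_norm_pow_le {E : Type*} [SeminormedAddCommGroup E] (q : ℕ) (v y : E) :
    (1 + ‖v‖) ^ q ≤ (1 + ‖y‖) ^ q * (1 + ‖v - y‖) ^ q := by
  rw [← mul_pow]
  have : ‖v‖ ≤ ‖v - y‖ + ‖y‖ := by simpa using norm_add_le (v - y) y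
  gcongr
  nlinarith [norm_nonneg y, norm_nonneg (v - y)]

section Jet

variable {E : Type*} [NormedAddCommGroup E] [NormedSpace ℝ E]

/-- Every derivative of order at most `l` decays faster than `(1 + ‖v‖) ^ (-q)`, with a uniform
constant. -/
lemma exists_weighted_iteratedFDeriv_le (G : SchwartzMap E ℂ) (q l : ℕ) :
    ∃ C : ℝ, 0 ≤ C ∧ ∀ i ≤ l, ∀ v, (1 + ‖v‖) ^ q * ‖iteratedFDeriv ℝ i G v‖ ≤ C := by
  refine ⟨_, ?_, fun i hi v =>
    one_add_le_sup_seminorm_apply (𝕜 := ℝ) (m := (q, l)) le_rfl hi G v⟩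
  exact mul_nonneg (by positivity) (apply_nonneg _ _)

lemma differentiable_iteratedFDeriv (G : SchwartzMap E ℂ) (i : ℕ) :
    Differentiable ℝ (iteratedFDeriv ℝ i G) :=
  (G.smooth ⊤).differentiable_iteratedFDeriv (by exact_mod_cast ENat.natCast_lt_top i)

lemma continuous_iteratedFDeriv (G : SchwartzMap E ℂ) (i : ℕ) :
    Continuous (iteratedFDeriv ℝ i G) :=
  (G.differentiable_iteratedFDeriv i).continuous

variable (E) in
/-- Jets of order `l` of complex-valued functions: one multilinear map per order. -/
def JetFiber (l : ℕ) : Type _ := (i : Fin (l + 1)) → E [×i]→L[ℝ] ℂ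

noncomputable instance (l : ℕ) : NormedAddCommGroup (JetFiber E l) :=
  inferInstanceAs (NormedAddCommGroup ((i : Fin (l + 1)) → E [×i]→L[ℝ] ℂ))

noncomputable instance (l : ℕ) : NormedSpace ℂ (JetFiber E l) :=
  inferInstanceAs (NormedSpace ℂ ((i : Fin (l + 1)) → E [×i]→L[ℝ] ℂ))

instance (l : ℕ) : CompleteSpace (JetFiber E l) :=
  inferInstanceAs (CompleteSpace ((i : Fin (l + 1)) → E [×i]→L[ℝ] ℂ))

/-- The component of order `i` of a jet. -/
noncomputable def JetFiber.proj {l : ℕ} (i : Fin (l + 1)) :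
    JetFiber E l →L[ℂ] E [×i]→L[ℝ] ℂ :=
  LinearMap.mkContinuous
    { toFun := fun J => J i
      map_add' := fun _ _ => rfl
      map_smul' := fun _ _ => rfl } 1
    fun J => (norm_le_pi_norm (G := fun i : Fin (l + 1) => E [×i]→L[ℝ] ℂ) J i).trans
      (one_mul _).ge

/-- The weighted derivatives of order at most `l` of a Schwartz function, as a bounded continuous
function. -/
noncomputable def jet (q l : ℕ) :
    SchwartzMap E ℂ →ₗ[ℂ] (E →ᵇ JetFiber E l) where
  toFun G := BoundedContinuousFunction.ofNormedAddCommGroup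
    (fun v i => ((1 + ‖v‖) ^ q : ℝ) • iteratedFDeriv ℝ i G v)
    (continuous_pi fun i => by
      have := G.continuous_iteratedFDeriv i
      fun_prop)
    (G.exists_weighted_iteratedFDeriv_le q l).choose
    (fun v => by
      obtain ⟨h0, h⟩ := (G.exists_weighted_iteratedFDeriv_le q l).choose_spec
      refine (pi_norm_le_iff_of_nonneg h0).2 fun i => ?_
      rw [norm_smul, Real.norm_of_nonneg (by positivity)]
      exact h i (Nat.lt_succ_iff.1 i.2) v)
  map_add' G H := by
    ext1 v
    funext i
    change ((1 + ‖v‖) ^ q : ℝ) • iteratedFDeriv ℝ i (⇑G + ⇑H) v =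
      ((1 + ‖v‖) ^ q : ℝ) • iteratedFDeriv ℝ i G v + ((1 + ‖v‖) ^ q : ℝ) • iteratedFDeriv ℝ i H v
    rw [iteratedFDeriv_add_apply ((G.smooth i).contDiffAt) ((H.smooth i).contDiffAt), smul_add]
  map_smul' c G := by
    ext1 v
    funext i
    change ((1 + ‖v‖) ^ q : ℝ) • iteratedFDeriv ℝ i (c • ⇑G) v =
      c • ((1 + ‖v‖) ^ q : ℝ) • iteratedFDeriv ℝ i G v
    rw [iteratedFDeriv_const_smul_apply ((G.smooth i).contDiffAt), smul_comm]

lemma jet_apply (q l : ℕ) (G : SchwartzMap E ℂ) (v : E) (i : Fin (l + 1)) :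
    jet q l G v i = ((1 + ‖v‖) ^ q : ℝ) • iteratedFDeriv ℝ i G v := rfl

lemma iteratedFDeriv_compSubConstCLM (G : SchwartzMap E ℂ) (i : ℕ) (y v : E) :
    iteratedFDeriv ℝ i (G.compSubConstCLM ℂ y) v = iteratedFDeriv ℝ i G (v - y) :=
  iteratedFDeriv_comp_sub i y v

lemma mu_le_norm_jet (q l : ℕ) (G : SchwartzMap E ℂ) :
    mu (q : ℤ) l G ≤ ENNReal.ofReal ‖jet q l G‖ := by
  refine iSup_le fun v => iSup₂_le fun i hi => ENNReal.ofReal_le_ofReal ?_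
  have h := (norm_le_pi_norm (jet q l G v) ⟨i, Nat.lt_succ_iff.2 hi⟩).trans
    ((jet q l G).norm_coe_le_norm v)
  rw [jet_apply, norm_smul, Real.norm_of_nonneg (by positivity)] at h
  simpa using h

lemma exists_norm_jet_compSubConstCLM_le (q l : ℕ) (G : SchwartzMap E ℂ) :
    ∃ C : ℝ, 0 ≤ C ∧ ∀ y, ‖jet q l (G.compSubConstCLM ℂ y)‖ ≤ (1 + ‖y‖) ^ q * C := by
  obtain ⟨C, hC, h⟩ := G.exists_weighted_iteratedFDeriv_le q l
  refine ⟨C, hC, fun y => (BoundedContinuousFunction.norm_le (by positivity)).2 fun v =>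
    (pi_norm_le_iff_of_nonneg (by positivity)).2 fun i => ?_⟩
  rw [jet_apply, norm_smul, Real.norm_of_nonneg (by positivity), iteratedFDeriv_compSubConstCLM]
  calc (1 + ‖v‖) ^ q * ‖iteratedFDeriv ℝ i G (v - y)‖
      ≤ ((1 + ‖y‖) ^ q * (1 + ‖v - y‖) ^ q) * ‖iteratedFDeriv ℝ i G (v - y)‖ := by
        gcongr
        exact one_add_norm_pow_le q v y
    _ ≤ (1 + ‖y‖) ^ q * C := by
        rw [mul_assoc]
        gcongr
        exact h i (Nat.lt_succ_iff.1 i.2) _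

lemma continuous_jet_compSubConstCLM (q l : ℕ) (G : SchwartzMap E ℂ) :
    Continuous fun y => jet q l (G.compSubConstCLM ℂ y) := by
  obtain ⟨C, hC, h⟩ := G.exists_weighted_iteratedFDeriv_le q (l + 1)
  refine continuous_iff_continuousAt.2 fun z => ?_
  have hlip : ∀ y ∈ Metric.closedBall z 1,
      ‖jet q l (G.compSubConstCLM ℂ y) - jet q l (G.compSubConstCLM ℂ z)‖
        ≤ ((2 + ‖z‖) ^ q * C) * ‖y - z‖ := by
    intro y hy
    refine (BoundedContinuousFunction.norm_le (by positivity)).2 fun v =>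
      (pi_norm_le_iff_of_nonneg (by positivity)).2 fun i => ?_
    change ‖jet q l (G.compSubConstCLM ℂ y) v i - jet q l (G.compSubConstCLM ℂ z) v i‖ ≤ _
    rw [jet_apply, jet_apply, iteratedFDeriv_compSubConstCLM, iteratedFDeriv_compSubConstCLM]
    have hd : ∀ w, HasFDerivAt
        (fun w => ((1 + ‖v‖) ^ q : ℝ) • iteratedFDeriv ℝ i G (v - w))
        (((1 + ‖v‖) ^ q : ℝ) • -(fderiv ℝ (iteratedFDeriv ℝ i G) (v - w))) w := by
      intro w
      have h1 := (G.differentiable_iteratedFDeriv i (v - w)).hasFDerivAt.comp w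
        ((hasFDerivAt_id w).const_sub v)
      have h2 := h1.const_smul ((1 + ‖v‖) ^ q : ℝ)
      refine h2.congr_fderiv ?_
      ext; simp
    refine (convex_closedBall z 1).norm_image_sub_le_of_norm_hasFDerivWithin_le
      (fun w _ => (hd w).hasFDerivWithinAt) (fun w hw => ?_)
      (Metric.mem_closedBall_self zero_le_one) hy
    have hwz : ‖w‖ ≤ 1 + ‖z‖ := by
      have := norm_add_le (w - z) z
      rw [mem_closedBall_iff_norm] at hw
      rw [sub_add_cancel] at this
      linarith
    rw [norm_smul, norm_neg, Real.norm_of_nonneg (by positivity), norm_fderiv_iteratedFDeriv]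
    calc (1 + ‖v‖) ^ q * ‖iteratedFDeriv ℝ (i + 1) G (v - w)‖
        ≤ ((1 + ‖w‖) ^ q * (1 + ‖v - w‖) ^ q) * ‖iteratedFDeriv ℝ (i + 1) G (v - w)‖ := by
          gcongr
          exact one_add_norm_pow_le q v w
      _ ≤ (2 + ‖z‖) ^ q * C := by
          rw [mul_assoc]
          have : 1 + ‖w‖ ≤ 2 + ‖z‖ := by linarith
          gcongr
          exact h _ (by omega) _
  rw [ContinuousAt, tendsto_iff_norm_sub_tendsto_zero]
  refine squeeze_zero' (Eventually.of_forall fun _ => norm_nonneg _)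
    (eventually_of_mem (Metric.closedBall_mem_nhds z one_pos) hlip) ?_
  have : Continuous fun y => ((2 + ‖z‖) ^ q * C) * ‖y - z‖ := by fun_prop
  simpa using this.tendsto z

end Jet

section Integral

variable {E : Type*} [NormedAddCommGroup E] [NormedSpace ℝ E] [MeasurableSpace E] [BorelSpace E]
  [SecondCountableTopology E] {ν : Measure E} [ν.HasTemperateGrowth]

lemma integrable_one_add_norm_pow_mul (f : SchwartzMap E ℂ) (q : ℕ) :
    Integrable (fun y => (1 + ‖y‖) ^ q * ‖f y‖) ν := by
  have h : Integrable (fun y => ∑ k ∈ Finset.range (q + 1),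
      (q.choose k : ℝ) * (‖y‖ ^ k * ‖f y‖)) ν :=
    integrable_finsetSum _ fun k _ => (f.integrable_pow_mul ν k).const_mul _
  refine h.congr (Eventually.of_forall fun y => ?_)
  simp only [add_comm (1 : ℝ), add_pow, Finset.sum_mul, one_pow, mul_one]
  exact Finset.sum_congr rfl fun k _ => by ring

lemma integrable_smul_jet_compSubConstCLM (q l : ℕ) (G f : SchwartzMap E ℂ) :
    Integrable (fun y => f y • jet q l (G.compSubConstCLM ℂ y)) ν := by
  obtain ⟨C, hC, h⟩ := G.exists_norm_jet_compSubConstCLM_le q l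
  refine ((f.integrable_one_add_norm_pow_mul q).const_mul C).mono'
    (f.continuous.smul (G.continuous_jet_compSubConstCLM q l)).aestronglyMeasurable
    (Eventually.of_forall fun y => ?_)
  rw [norm_smul]
  calc ‖f y‖ * ‖jet q l (G.compSubConstCLM ℂ y)‖ ≤ ‖f y‖ * ((1 + ‖y‖) ^ q * C) := by
        gcongr
        exact h y
    _ = _ := by ring

lemma integrable_smul_iteratedFDeriv_sub (G f : SchwartzMap E ℂ) (i : ℕ) (v : E) :
    Integrable (fun y => f y • iteratedFDeriv ℝ i G (v - y)) ν := by
  obtain ⟨C, hC, h⟩ := G.exists_weighted_iteratedFDeriv_le 0 i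
  have hc := G.continuous_iteratedFDeriv i
  refine (f.integrable.norm.mul_const C).mono'
    (f.continuous.smul (by fun_prop)).aestronglyMeasurable (Eventually.of_forall fun y => ?_)
  rw [norm_smul]
  gcongr
  simpa using h i le_rfl (v - y)

/-- Differentiation under the integral sign for the convolution of two Schwartz functions. -/
lemma iteratedFDeriv_eq_integral (G f h : SchwartzMap E ℂ)
    (hh : ∀ v, h v = ∫ y, f y * G (v - y) ∂ν) (i : ℕ) (v : E) :
    iteratedFDeriv ℝ i h v = ∫ y, f y • iteratedFDeriv ℝ i G (v - y) ∂ν := by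
  induction i generalizing v with
  | zero =>
    ext w
    rw [ContinuousMultilinearMap.integral_apply (integrable_smul_iteratedFDeriv_sub G f 0 v)]
    simp [hh]
  | succ i ih =>
    have hi : iteratedFDeriv ℝ i h = fun v => ∫ y, f y • iteratedFDeriv ℝ i G (v - y) ∂ν :=
      funext ih
    obtain ⟨C, hC, hb⟩ := G.exists_weighted_iteratedFDeriv_le 0 (i + 1)
    have hcont : Continuous (fderiv ℝ (iteratedFDeriv ℝ i G)) :=
      ((continuousMultilinearCurryLeftEquiv ℝ (fun _ : Fin (i + 1) => E) ℂ).symm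
        |>.comp_continuous_iff).1 (G.continuous_iteratedFDeriv (i + 1))
    have hder : HasFDerivAt (fun v => ∫ y, f y • iteratedFDeriv ℝ i G (v - y) ∂ν)
        (∫ y, f y • fderiv ℝ (iteratedFDeriv ℝ i G) (v - y) ∂ν) v := by
      refine hasFDerivAt_integral_of_dominated_of_fderiv_le (bound := fun y => ‖f y‖ * C)
        (F' := fun v y => f y • fderiv ℝ (iteratedFDeriv ℝ i G) (v - y))
        univ_mem
        (Eventually.of_forall fun v =>
          (integrable_smul_iteratedFDeriv_sub G f i v).aestronglyMeasurable)
        (integrable_smul_iteratedFDeriv_sub G f i v)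
        (f.continuous.smul (by fun_prop)).aestronglyMeasurable
        (Eventually.of_forall fun y w _ => ?_)
        (f.integrable.norm.mul_const C)
        (Eventually.of_forall fun y w _ => ?_)
      · rw [norm_smul, norm_fderiv_iteratedFDeriv]
        gcongr
        simpa using hb (i + 1) le_rfl (w - y)
      · have h1 := (G.differentiable_iteratedFDeriv i (w - y)).hasFDerivAt.comp w
          ((hasFDerivAt_id w).sub_const y)
        exact h1.const_smul (f y)
    rw [iteratedFDeriv_succ_eq_comp_left, Function.comp_apply, hi, hder.fderiv]
    exact (ContinuousLinearEquiv.integral_comp_comm (𝕜 := ℝ) (E := E →L[ℝ] E [×i]→L[ℝ] ℂ)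
      (F := E [×(i + 1)]→L[ℝ] ℂ) (μ := ν)
      (continuousMultilinearCurryLeftEquiv ℝ (fun _ : Fin (i + 1) => E) ℂ).symm
      fun y => f y • fderiv ℝ (iteratedFDeriv ℝ i G) (v - y)).symm

/-- A linear functional bounded by a weighted seminorm commutes with the superposition of
translates defining a convolution. -/
lemma integral_functional_compSubConstCLM (T : SchwartzMap E ℂ →ₗ[ℂ] ℂ) (q l : ℕ) (C : ℝ)
    (hT : ∀ g, ‖T g‖ ≤ C * ‖jet q l g‖) (G f h : SchwartzMap E ℂ)
    (hh : ∀ v, h v = ∫ y, f y * G (v - y) ∂ν) :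
    ∫ y, f y * T (G.compSubConstCLM ℂ y) ∂ν = T h := by
  have hker : LinearMap.ker (jet q l) ≤ LinearMap.ker T := by
    intro g hg
    have := hT g
    rw [LinearMap.mem_ker.1 hg, norm_zero, mul_zero] at this
    simpa using this
  let S : LinearMap.range (jet (E := E) q l) →ₗ[ℂ] ℂ :=
    (LinearMap.ker (jet q l)).liftQ T hker ∘ₗ (jet q l).quotKerEquivRange.symm.toLinearMap
  have hS : ∀ g, S ⟨jet q l g, LinearMap.mem_range_self _ g⟩ = T g := fun g => by
    simp [S, LinearMap.quotKerEquivRange_symm_apply_image]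
  obtain ⟨R, hR, -⟩ := exists_extension_norm_eq _ (S.mkContinuous C (by
    rintro ⟨_, g, rfl⟩
    rw [hS]
    exact hT g))
  have hRT : ∀ g, R (jet q l g) = T g := fun g =>
    (hR ⟨_, LinearMap.mem_range_self _ g⟩).trans (hS g)
  have hint := integrable_smul_jet_compSubConstCLM (ν := ν) q l G f
  have hjet : jet q l h = ∫ y, f y • jet q l (G.compSubConstCLM ℂ y) ∂ν := by
    ext1 v
    funext i
    let P : (E →ᵇ JetFiber E l) →L[ℂ] E [×i]→L[ℝ] ℂ :=
      (JetFiber.proj i).comp (BoundedContinuousFunction.evalCLM ℂ v)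
    have hP := P.integral_comp_comm hint
    change _ = P (∫ y, f y • jet q l (G.compSubConstCLM ℂ y) ∂ν)
    rw [← hP, jet_apply, iteratedFDeriv_eq_integral G f h hh, ← integral_smul]
    refine integral_congr_ae (Eventually.of_forall fun y => ?_)
    change ((1 + ‖v‖) ^ q : ℝ) • f y • iteratedFDeriv ℝ i G (v - y) =
      f y • jet q l (G.compSubConstCLM ℂ y) v i
    rw [jet_apply, iteratedFDeriv_compSubConstCLM, smul_comm]
  rw [← hRT h, hjet, ← R.integral_comp_comm hint]
  simp [hRT]

end Integral

end SchwartzMap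

/-- The rescaling of a Schwartz function is a Schwartz function. -/
lemma SchwartzMap.exists_eq_scaled {d : ℕ} (φ : SchwartzMap (Fin d → ℝ) ℂ) {t : ℝ} (ht : 0 < t) :
    ∃ Φ : SchwartzMap (Fin d → ℝ) ℂ, ∀ u, Φ u = scaled ⇑φ t u :=
  ⟨((t ^ (-(d : ℤ)) : ℝ) : ℂ) • SchwartzMap.compCLMOfContinuousLinearEquiv ℂ
    (ContinuousLinearEquiv.smulLeft (Units.mk0 t⁻¹ (inv_ne_zero ht.ne'))) φ, fun _ => rfl⟩

lemma norm_apply_le_of_mu_le {E : Type*} [NormedAddCommGroup E] [NormedSpace ℝ E] (g : E → ℂ)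
    (p : ℕ) {K : ℝ} (hK : 0 ≤ K) (v : E) (h : mu (-(p : ℤ)) 0 g ≤ ENNReal.ofReal K) :
    ‖g v‖ ≤ K * (1 + ‖v‖) ^ p := by
  have h1 : ENNReal.ofReal ((1 + ‖v‖) ^ (-(p : ℤ)) * ‖iteratedFDeriv ℝ 0 g v‖)
      ≤ ENNReal.ofReal K :=
    (le_iSup_of_le v (le_iSup₂_of_le (f := fun (i : ℕ) (_ : i ≤ 0) =>
      ENNReal.ofReal ((1 + ‖v‖) ^ (-(p : ℤ)) * ‖iteratedFDeriv ℝ i g v‖)) 0 le_rfl le_rfl)).trans h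
  rw [ENNReal.ofReal_le_ofReal_iff hK, norm_iteratedFDeriv_zero, zpow_neg, zpow_natCast,
    inv_mul_le_iff₀ (by positivity)] at h1
  rwa [mul_comm]

/-- exchange of the integral and the operator: the kernel applied to `f`
equals the regularized operator applied to `ψ_ε ∗ f`. -/
theorem stmt14 (m n : ℕ) (hm : 1 ≤ m) (hn : 1 ≤ n)
    (L : SchwartzMap (Fin n → ℝ) ℂ →ₗ[ℂ] ((Fin m → ℝ) → ℂ))
    (hsm : ∀ f, TemperateGrowth' (L f)) (hcont : ContinuousIntoOM m n ⇑L)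
    (ψ : SchwartzMap (Fin n → ℝ) ℂ) (φ : SchwartzMap (Fin m → ℝ) ℂ)
    (ε : ℝ) (hε : ε ∈ Set.Ioc (0:ℝ) 1)
    (Ψ : (Fin n → ℝ) → SchwartzMap (Fin n → ℝ) ℂ)
    (hΨ : ∀ y v, Ψ y v = scaled ⇑ψ ε (y - v))
    (f : SchwartzMap (Fin n → ℝ) ℂ)
    (h : SchwartzMap (Fin n → ℝ) ℂ)
    (hh : ∀ v, h v = ∫ y : Fin n → ℝ, scaled ⇑ψ ε (y - v) * f y)
    (x : Fin m → ℝ) :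
    (∫ y : Fin n → ℝ, (∫ u : Fin m → ℝ, L (Ψ y) (x - u) * scaled ⇑φ ε u) * f y)
      = ∫ u : Fin m → ℝ, L h (x - u) * scaled ⇑φ ε u := by
  obtain ⟨C, hC, p, q, l, hL⟩ := hcont 0
  obtain ⟨Φ, hΦ⟩ := SchwartzMap.exists_eq_scaled φ hε.1
  have hbound : ∀ g u, ‖L g (x - u) * scaled ⇑φ ε u‖ ≤
      (C * ‖SchwartzMap.jet q l g‖ * (1 + ‖x‖) ^ p) * ((1 + ‖u‖) ^ p * ‖Φ u‖) := by
    intro g u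
    have h1 := norm_apply_le_of_mu_le (L g) p (by positivity) (x - u) <| calc
      mu (-(p : ℤ)) 0 (L g) ≤ ENNReal.ofReal C * mu (q : ℤ) l g := hL g
      _ ≤ ENNReal.ofReal C * ENNReal.ofReal ‖SchwartzMap.jet q l g‖ := by
        gcongr
        exact SchwartzMap.mu_le_norm_jet q l g
      _ = ENNReal.ofReal (C * ‖SchwartzMap.jet q l g‖) := (ENNReal.ofReal_mul hC).symm
    have h2 : (1 + ‖x - u‖) ^ p ≤ (1 + ‖x‖) ^ p * (1 + ‖u‖) ^ p := by
      simpa [norm_sub_rev] using SchwartzMap.one_add_norm_pow_le p (x - u) x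
    rw [norm_mul, hΦ]
    calc ‖L g (x - u)‖ * ‖scaled ⇑φ ε u‖
        ≤ (C * ‖SchwartzMap.jet q l g‖ * ((1 + ‖x‖) ^ p * (1 + ‖u‖) ^ p)) *
            ‖scaled ⇑φ ε u‖ := by
          gcongr
          exact h1.trans (by gcongr)
      _ = _ := by ring
  have hint : ∀ g, Integrable fun u => L g (x - u) * scaled ⇑φ ε u := by
    intro g
    have hLc := (hsm g).1.continuous
    have hφc : Continuous (scaled ⇑φ ε) := by
      rw [← funext hΦ]
      exact Φ.continuous
    exact ((Φ.integrable_one_add_norm_pow_mul p).const_mul _).mono'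
      (by fun_prop) (Eventually.of_forall (hbound g))
  let T : SchwartzMap (Fin n → ℝ) ℂ →ₗ[ℂ] ℂ :=
    { toFun := fun g => ∫ u, L g (x - u) * scaled ⇑φ ε u
      map_add' := fun g₁ g₂ => by
        simp only [map_add, Pi.add_apply, add_mul]
        exact integral_add (hint g₁) (hint g₂)
      map_smul' := fun c g => by
        simp only [map_smul, Pi.smul_apply, smul_eq_mul, mul_assoc, RingHom.id_apply]
        exact integral_const_mul _ _ }
  have hT : ∀ g, ‖T g‖ ≤
      (C * (1 + ‖x‖) ^ p * ∫ u, (1 + ‖u‖) ^ p * ‖Φ u‖) * ‖SchwartzMap.jet q l g‖ := by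
    intro g
    refine (norm_integral_le_of_norm_le
      ((Φ.integrable_one_add_norm_pow_mul p).const_mul _)
      (Eventually.of_forall (hbound g))).trans_eq ?_
    rw [integral_const_mul]
    ring
  have hΨ0 : ∀ y, Ψ y = (Ψ 0).compSubConstCLM ℂ y := fun y => by
    ext v
    rw [SchwartzMap.compSubConstCLM_apply, hΨ, hΨ, zero_sub, neg_sub]
  have key := SchwartzMap.integral_functional_compSubConstCLM (ν := volume) T q l _ hT (Ψ 0) f h
    fun v => by
      rw [hh]
      refine integral_congr_ae (Eventually.of_forall fun y => ?_)
      simp only [hΨ, zero_sub, neg_sub, mul_comm]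
  refine Eq.trans ?_ key
  refine integral_congr_ae (Eventually.of_forall fun y => ?_)
  simp only [← hΨ0, mul_comm (f y)]
  rfl
end
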